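/- (Theorem 4) Let b > 0 and k ≥ 1. Let Θ̂ be a random parameter vector Θ̂ = (γ̂, β̂) taking values in (0,∞)² (an estimator computed from a sample independent of the data being privatized and of the noise). Define the mechanism that maps an input z = (z_1,…,z_k) ∈ (0,∞)^k to Z* = (H_{Θ̂}(G_{Θ̂}(z_1) + e_1), …, H_{Θ̂}(G_{Θ̂}(z_k) + e_k)), where e_1,…,e_k are independent Laplace(0,b) random variables independent of Θ̂, G_{Θ̂} is the cdf of GPD(γ̂, β̂), H_{Θ̂} = G_{Θ̂}^{−1} ∘ R, and R is the cdf of U + e with U ~ Uniform(0,1) independent of e ~ Laplace(0,b). Then for any two inputs z, z′ ∈ (0,∞)^k differing in exactly one coordinate and any Borel set B ⊆ ℝ^k, P(Z*(z) ∈ B) ≤ e^{b} · P(Z*(z′) ∈ B); that is, the mechanism with estimated parameter is b-differentially private. -/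

import Mathlib

open MeasureTheory ProbabilityTheory Real Set

noncomputable section

/-- The density of the Laplace distribution with location `0` and scale parameter `b`. -/
def laplacePDF (b x : ℝ) : ℝ := b / 2 * Real.exp (-b * |x|)

/-- The Laplace(0, b) measure on `ℝ`. -/
def laplaceMeasure (b : ℝ) : Measure ℝ :=
  volume.withDensity fun x => ENNReal.ofReal (laplacePDF b x)

/-- The uniform distribution on the interval `(0,1)`. -/
def unifMeasure : Measure ℝ := volume.restrict (Set.Ioo 0 1)

/-- The cdf of the generalized Pareto distribution GPD(γ, β). -/
def gpdCDF (γ β y : ℝ) : ℝ := if y < 0 then 0 else 1 - (1 + γ * y / β) ^ (-(1 / γ))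

/-- The inverse on `(0,1)` of the cdf of GPD(γ, β). -/
def gpdCDFInv (γ β p : ℝ) : ℝ := β / γ * ((1 - p) ^ (-γ) - 1)

/-- `H_θ = G_θ^{-1} ∘ R` for a parameter `θ = (γ, β)` and a function `R`. -/
def Hfun (θ : ℝ × ℝ) (R : ℝ → ℝ) (x : ℝ) : ℝ := gpdCDFInv θ.1 θ.2 (R x)

theorem aux_laplace_shift (b : ℝ) (hb : 0 < b) (c c' : ℝ) (h : |c - c'| ≤ 1)
    (s : Set ℝ) (hs : MeasurableSet s) :
    laplaceMeasure b {x | x + c ∈ s} ≤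
      ENNReal.ofReal (Real.exp b) * laplaceMeasure b {x | x + c' ∈ s} := by
  have key : ∀ c : ℝ, laplaceMeasure b {x | x + c ∈ s} =
      ∫⁻ x, s.indicator (fun x => ENNReal.ofReal (laplacePDF b (x - c))) x := by
    intro c
    have hm : MeasurableSet {x : ℝ | x + c ∈ s} := (measurable_add_const c) hs
    rw [laplaceMeasure, withDensity_apply _ hm, ← lintegral_indicator hm,
      ← lintegral_add_right_eq_self
        (fun x => s.indicator (fun x => ENNReal.ofReal (laplacePDF b (x - c))) x) c]
    refine lintegral_congr fun x => ?_
    by_cases hx : x + c ∈ s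
    · rw [indicator_of_mem hx, indicator_of_mem (show x ∈ {x : ℝ | x + c ∈ s} from hx)]
      simp
    · rw [indicator_of_notMem hx, indicator_of_notMem (show x ∉ {x : ℝ | x + c ∈ s} from hx)]
  rw [key c, key c', ← lintegral_const_mul' _ _ ENNReal.ofReal_ne_top]
  refine lintegral_mono fun x => ?_
  by_cases hx : x ∈ s
  · simp only [indicator_of_mem hx]
    rw [← ENNReal.ofReal_mul (Real.exp_nonneg b)]
    refine ENNReal.ofReal_le_ofReal ?_
    unfold laplacePDF
    rw [mul_left_comm, ← Real.exp_add]
    refine mul_le_mul_of_nonneg_left (Real.exp_le_exp.2 ?_) (by positivity)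
    have h1 : |x - c'| ≤ |x - c| + |c - c'| := abs_sub_le _ _ _
    nlinarith
  · simp [indicator_of_notMem hx]

theorem aux_pi_shift (b : ℝ) (hb : 0 < b) [IsProbabilityMeasure (laplaceMeasure b)]
    (n : ℕ) (i : Fin (n + 1)) (c c' : Fin (n + 1) → ℝ) (h : |c i - c' i| ≤ 1)
    (hne : ∀ j, j ≠ i → c j = c' j) (A : Set (Fin (n + 1) → ℝ)) (hA : MeasurableSet A) :
    Measure.pi (fun _ : Fin (n + 1) => laplaceMeasure b) {x | (fun j => c j + x j) ∈ A} ≤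
      ENNReal.ofReal (Real.exp b) *
        Measure.pi (fun _ : Fin (n + 1) => laplaceMeasure b) {x | (fun j => c' j + x j) ∈ A} := by
  have mp := (measurePreserving_piFinSuccAbove
    (fun _ : Fin (n + 1) => laplaceMeasure b) i).symm
  have hmeas : ∀ c : Fin (n + 1) → ℝ, MeasurableSet {x : Fin (n + 1) → ℝ | (fun j => c j + x j) ∈ A} :=
    fun c => (show Measurable (fun x : Fin (n + 1) → ℝ => fun j => c j + x j) by fun_prop) hA
  rw [← mp.measure_preimage (hmeas c).nullMeasurableSet,
    ← mp.measure_preimage (hmeas c').nullMeasurableSet,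
    Measure.prod_apply_symm (mp.measurable (hmeas c)),
    Measure.prod_apply_symm (mp.measurable (hmeas c')),
    ← lintegral_const_mul' _ _ ENNReal.ofReal_ne_top]
  refine lintegral_mono fun y => ?_
  have hS : MeasurableSet {t : ℝ | (i.insertNth t (fun j => c' (i.succAbove j) + y j) :
      Fin (n + 1) → ℝ) ∈ A} := by
    refine (show Measurable (fun t : ℝ => (i.insertNth t (fun j => c' (i.succAbove j) + y j) :
      Fin (n + 1) → ℝ)) from ?_) hA
    refine measurable_pi_iff.2 (i.forall_iff_succAbove.2 ⟨?_, fun j => ?_⟩)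
    · simpa using measurable_id'
    · simp
  have key : ∀ d : Fin (n + 1) → ℝ, (∀ j, j ≠ i → d j = c' j) → ∀ x : ℝ,
      (fun j => d j + (i.insertNth x y : Fin (n + 1) → ℝ) j) =
      (i.insertNth (x + d i) (fun j => c' (i.succAbove j) + y j) : Fin (n + 1) → ℝ) := by
    intro d hd x
    funext j
    refine i.succAboveCases ?_ (fun j => ?_) j
    · simp [add_comm]
    · simp [hd _ (Fin.succAbove_ne i j)]
  have := aux_laplace_shift b hb (c i) (c' i) h _ hS
  convert this using 2
  · ext x
    have := key c hne x
    simp only [mem_preimage, mem_ofPred_eq, ← this]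
    rfl
  · congr 1
    ext x
    have := key c' (fun _ _ => rfl) x
    simp only [mem_preimage, mem_ofPred_eq, ← this]
    rfl

theorem aux_gpd_mem (γ β y : ℝ) (hγ : 0 < γ) (hβ : 0 < β) (hy : 0 < y) :
    0 ≤ gpdCDF γ β y ∧ gpdCDF γ β y ≤ 1 := by
  have h : 0 < γ * y / β := by positivity
  have h1 : (1 + γ * y / β) ^ (-(1 / γ)) ≤ 1 :=
    Real.rpow_le_one_of_one_le_of_nonpos (by linarith) (by simp [hγ.le])
  have h2 : 0 ≤ (1 + γ * y / β) ^ (-(1 / γ)) := Real.rpow_nonneg (by linarith) _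
  rw [gpdCDF, if_neg (not_lt.2 hy.le)]
  constructor <;> linarith

/-- Theorem 4: the perturbation mechanism with a random estimated parameter
`Θ̂ = (γ̂, β̂)` taking values in `(0,∞)²`, independent of the Laplace noise, mapping
`z ↦ (H_Θ̂(G_Θ̂(z_1) + e_1), …, H_Θ̂(G_Θ̂(z_k) + e_k))`, is `b`-differentially private. -/
theorem gpd_perturbation_mechanism_estimated_parameter_differentially_private
    {Ω : Type*} [MeasurableSpace Ω] (P : Measure Ω) [IsProbabilityMeasure P]
    {Ω' : Type*} [MeasurableSpace Ω'] (P' : Measure Ω') [IsProbabilityMeasure P']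
    (b : ℝ) (hb : 0 < b) (k : ℕ) (hk : 1 ≤ k)
    (e : Fin k → Ω → ℝ) (hem : ∀ j, Measurable (e j))
    (hind : iIndepFun e P)
    (hlaw : ∀ j, Measure.map (e j) P = laplaceMeasure b)
    (Θhat : Ω → ℝ × ℝ) (hΘm : Measurable Θhat)
    (hΘpos : ∀ ω, 0 < (Θhat ω).1 ∧ 0 < (Θhat ω).2)
    (hΘe : IndepFun (fun ω => (fun j => e j ω)) Θhat P)
    (U e' : Ω' → ℝ) (hUm : Measurable U) (he'm : Measurable e')
    (hU : Measure.map U P' = unifMeasure)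
    (he' : Measure.map e' P' = laplaceMeasure b)
    (hUe' : IndepFun U e' P')
    (R : ℝ → ℝ) (hR : ∀ x, R x = (P' {ω | U ω + e' ω ≤ x}).toReal)
    (z z' : Fin k → ℝ) (hz : ∀ j, 0 < z j) (hz' : ∀ j, 0 < z' j)
    (hdiff : ∃ i₀ : Fin k, (∀ j, j ≠ i₀ → z j = z' j))
    (B : Set (Fin k → ℝ)) (hB : MeasurableSet B) :
    P {ω | (fun j => Hfun (Θhat ω) R (gpdCDF (Θhat ω).1 (Θhat ω).2 (z j) + e j ω)) ∈ B} ≤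
      ENNReal.ofReal (Real.exp b) *
        P {ω | (fun j => Hfun (Θhat ω) R (gpdCDF (Θhat ω).1 (Θhat ω).2 (z' j) + e j ω)) ∈ B} := by
  have : NeZero k := ⟨by omega⟩
  have hprob : IsProbabilityMeasure (laplaceMeasure b) := by
    rw [← hlaw 0]
    exact Measure.isProbabilityMeasure_map (hem 0).aemeasurable
  have hRm : Measurable R := by
    refine Monotone.measurable fun x y hxy => ?_
    rw [hR, hR]
    exact ENNReal.toReal_mono (measure_ne_top _ _)
      (measure_mono fun ω (hω : _ ≤ _) => le_trans hω hxy)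
  have hjoint : Measure.map (fun ω => ((fun j => e j ω), Θhat ω)) P =
      (Measure.pi (fun _ : Fin k => laplaceMeasure b)).prod (P.map Θhat) := by
    rw [hΘe.map_prod_eq_prod_map_map (by fun_prop) hΘm.aemeasurable,
      hind.map_fun_eq_pi_map (fun j => (hem j).aemeasurable)]
    simp only [hlaw]
  have hΘprob : IsProbabilityMeasure (P.map Θhat) :=
    Measure.isProbabilityMeasure_map hΘm.aemeasurable
  have hGm : ∀ y : ℝ, Measurable (fun θ : ℝ × ℝ => gpdCDF θ.1 θ.2 y) := by
    intro y
    unfold gpdCDF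
    refine Measurable.ite (MeasurableSet.const _) (by fun_prop) ?_
    fun_prop
  have hHm : Measurable (fun p : (ℝ × ℝ) × ℝ => Hfun p.1 R p.2) := by
    unfold Hfun gpdCDFInv
    fun_prop
  have hF : ∀ w : Fin k → ℝ, Measurable (fun p : (Fin k → ℝ) × (ℝ × ℝ) =>
      fun j => Hfun p.2 R (gpdCDF p.2.1 p.2.2 (w j) + p.1 j)) := by
    intro w
    refine measurable_pi_iff.2 fun j => ?_
    refine hHm.comp (measurable_snd.prodMk ?_)
    exact ((hGm (w j)).comp measurable_snd).add (by fun_prop)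
  have hrew : ∀ w : Fin k → ℝ,
      P {ω | (fun j => Hfun (Θhat ω) R (gpdCDF (Θhat ω).1 (Θhat ω).2 (w j) + e j ω)) ∈ B} =
      ∫⁻ θ, Measure.pi (fun _ : Fin k => laplaceMeasure b)
        {x | (fun j => gpdCDF θ.1 θ.2 (w j) + x j) ∈
          (fun v : Fin k → ℝ => fun j => Hfun θ R (v j)) ⁻¹' B} ∂(P.map Θhat) := by
    intro w
    have h1 := Measure.prod_apply_symm (μ := Measure.pi (fun _ : Fin k => laplaceMeasure b))
      (ν := P.map Θhat) (hF w hB)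
    rw [← hjoint, Measure.map_apply (by fun_prop) (hF w hB)] at h1
    exact h1
  rw [hrew z, hrew z', ← lintegral_const_mul' _ _ ENNReal.ofReal_ne_top]
  have hpos : ∀ᵐ θ ∂(P.map Θhat), 0 < θ.1 ∧ 0 < θ.2 := by
    rw [ae_map_iff hΘm.aemeasurable]
    · exact Filter.Eventually.of_forall hΘpos
    · exact (measurableSet_lt measurable_const measurable_fst).inter
        (measurableSet_lt measurable_const measurable_snd)
  refine lintegral_mono_ae ?_
  filter_upwards [hpos] with θ hθ
  obtain ⟨i, hi⟩ := hdiff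
  obtain ⟨n, rfl⟩ : ∃ n, k = n + 1 := ⟨k - 1, by omega⟩
  refine aux_pi_shift b hb n i (fun j => gpdCDF θ.1 θ.2 (z j)) (fun j => gpdCDF θ.1 θ.2 (z' j))
    ?_ (fun j hj => by simp only [hi j hj]) _ ?_
  · have h1 := aux_gpd_mem θ.1 θ.2 (z i) hθ.1 hθ.2 (hz i)
    have h2 := aux_gpd_mem θ.1 θ.2 (z' i) hθ.1 hθ.2 (hz' i)
    exact abs_le.2 ⟨by linarith, by linarith⟩
  · refine (show Measurable (fun v : Fin (n + 1) → ℝ => fun j => Hfun θ R (v j)) from ?_) hB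
    refine measurable_pi_iff.2 fun j => ?_
    exact hHm.comp (measurable_const.prodMk (measurable_pi_apply j))

end
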